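/- Let d ≥ 2, n ≥ 1, let x ∈ ℝ^n be a fixed signal, let η ∈ (0, 1], and let P be a Borel probability measure on ℝ^{n(d−1)}. Then there exists γ ∈ Γ such that for every i ∈ {1, …, d}: λ(e_i, γ) ≤ −(1/η) ln ∫ exp(−η λ(e_i, ξ(α, x))) dP(α). -/

import Mathlib

/-!
Although the experts may leave the probability simplex, the prediction can be found inside it, by
a variational argument. Write `G i` for the generalized prediction on outcome
`i`. The prediction is the minimizer `p` over the simplex of `q ↦ ∑ i, q i * G i + ∑ i, q i ^ 2`;
its first-order conditions (`exists_simplex_point`) give `G i + 2 p i ≥ ⟨p, G⟩ + 2 ‖p‖²`.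
Since the loss of `p` at `e_i` is `‖p‖² - 2 p i + 1`, it remains to see `⟨p, G⟩ ≥ 1 - ‖p‖²`.

This last bound comes from a supporting hyperplane to the exponentiated prediction set at `p`:
`∑ i, p i * exp (-η λ(e_i, ξ)) / exp (-η λ(e_i, p)) ≤ 1` for every vector `ξ`
(`support_ineq`). With `u = ξ - p` this says that the centred moment generating function at `2η`
of the random variable `u`, distributed according to `p`, is at most `exp (η ‖u‖²)`. By Hoeffding's
lemma it is at most `exp (η² R² / 2)`, `R` being the range of `u`, and `R² ≤ 2 ‖u‖²`, `η ≤ 1`.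
Integrating over the experts and using `log t ≤ t - 1` yields the bound on `⟨p, G⟩`.
-/

open Finset MeasureTheory

noncomputable section

/-- Brier loss: squared Euclidean distance between prediction and outcome. -/
def brier {d : ℕ} (y γ : Fin d → ℝ) : ℝ := ∑ i, (γ i - y i) ^ 2

/-- Linear expert prediction: ξ_i = 1/d + α_i'x for i < d-1, and the last
component is one minus the sum of the others. -/
def expertPred (n d : ℕ) (α : Fin (d - 1) → Fin n → ℝ) (x : Fin n → ℝ) : Fin d → ℝ :=
  fun i =>
    if h : (i : ℕ) < d - 1 then (1 : ℝ) / d + ∑ j, α ⟨i, h⟩ j * x j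
    else 1 - ∑ k : Fin (d - 1), ((1 : ℝ) / d + ∑ j, α k j * x j)

theorem brier_single {d : ℕ} (i : Fin d) (γ : Fin d → ℝ) :
    brier (Pi.single i 1) γ = ∑ j, γ j ^ 2 - 2 * γ i + 1 := by
  unfold brier
  have h : ∀ j, (γ j - (Pi.single i 1 : Fin d → ℝ) j) ^ 2
      = γ j ^ 2 + (if j = i then -2 * γ i + 1 else 0) := by
    intro j
    by_cases hj : j = i
    · subst hj; simp; ring
    · simp [hj]
  simp only [h, Finset.sum_add_distrib, Finset.sum_ite_eq', Finset.mem_univ, if_true]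
  ring

/-- Hoeffding's lemma for a finitely supported distribution `p`, with the squared range of `u`
replaced by the larger quantity `2 ‖u‖²`. -/
theorem finite_hoeffding {d : ℕ} (p u : Fin d → ℝ) (hp : p ∈ stdSimplex ℝ (Fin d)) (t : ℝ) :
    ∑ i, p i * Real.exp (t * (u i - ∑ j, p j * u j))
      ≤ Real.exp (t ^ 2 / 4 * ∑ j, u j ^ 2) := by
  obtain ⟨hp0, hp1⟩ := hp
  let μ : Measure (Fin d) := ∑ i, ENNReal.ofReal (p i) • Measure.dirac i
  have hμ : IsProbabilityMeasure μ := by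
    constructor
    simp only [μ, Measure.coe_finsetSum, Finset.sum_apply, Measure.smul_apply, measure_univ,
      smul_eq_mul, mul_one]
    rw [← ENNReal.ofReal_sum_of_nonneg (fun i _ => hp0 i), hp1, ENNReal.ofReal_one]
  have hint : ∀ f : Fin d → ℝ, ∫ i, f i ∂μ = ∑ i, p i * f i := by
    intro f
    rw [integral_finsetSum_measure fun i _ =>
      Integrable.smul_measure Integrable.of_finite ENNReal.ofReal_ne_top]
    simp [integral_smul_measure, ENNReal.toReal_ofReal, hp0]
  have hne : (Finset.univ : Finset (Fin d)).Nonempty := by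
    by_contra h
    rw [Finset.not_nonempty_iff_eq_empty] at h
    simp [h] at hp1
  obtain ⟨a, -, ha⟩ := Finset.exists_min_image Finset.univ u hne
  obtain ⟨b, -, hb⟩ := Finset.exists_max_image Finset.univ u hne
  have hsub := ProbabilityTheory.hasSubgaussianMGF_of_mem_Icc (μ := μ) (X := u) (a := u a) (b := u b)
    (measurable_of_finite u).aemeasurable
    (Filter.Eventually.of_forall fun i => ⟨ha i (Finset.mem_univ i), hb i (Finset.mem_univ i)⟩)
  have h := hsub.mgf_le t
  rw [ProbabilityTheory.mgf, hint, hint] at h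
  refine h.trans (Real.exp_le_exp.mpr ?_)
  have hR : (u b - u a) ^ 2 ≤ 2 * ∑ j, u j ^ 2 := by
    by_cases hab : a = b
    · subst hab
      simpa using Finset.sum_nonneg fun j _ => sq_nonneg (u j)
    · have h2 : ∑ j ∈ {a, b}, u j ^ 2 ≤ ∑ j, u j ^ 2 :=
        Finset.sum_le_sum_of_subset_of_nonneg (Finset.subset_univ _) fun j _ _ => sq_nonneg _
      rw [Finset.sum_pair hab] at h2
      nlinarith [sq_nonneg (u a + u b)]
  simp only [NNReal.coe_pow, NNReal.coe_div, coe_nnnorm, Real.norm_eq_abs, NNReal.coe_ofNat,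
    div_pow, sq_abs]
  nlinarith [mul_le_mul_of_nonneg_right hR (sq_nonneg t)]

/-- The exponentiated losses of any `ξ` lie below the hyperplane with normal
`p i / exp (-η λ(e_i, p))` through the exponentiated losses of `p`. -/
theorem support_ineq {d : ℕ} (p ξ : Fin d → ℝ) (hp : p ∈ stdSimplex ℝ (Fin d)) (η : ℝ)
    (hη : η ∈ Set.Ioc (0 : ℝ) 1) :
    ∑ i, p i * Real.exp (η * brier (Pi.single i 1) p) *
      Real.exp (-η * brier (Pi.single i 1) ξ) ≤ 1 := by
  have h := finite_hoeffding p (fun i => ξ i - p i) hp (2 * η)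
  set m := ∑ j, p j * (ξ j - p j) with hm
  set s := ∑ j, (ξ j - p j) ^ 2 with hs
  have hs0 : 0 ≤ s := Finset.sum_nonneg fun j _ => sq_nonneg _
  have hξ : ∑ j, ξ j ^ 2 = ∑ j, p j ^ 2 + 2 * m + s := by
    rw [hm, hs, Finset.mul_sum, ← Finset.sum_add_distrib, ← Finset.sum_add_distrib]
    exact Finset.sum_congr rfl fun j _ => by ring
  have he : ∀ i, p i * Real.exp (η * brier (Pi.single i 1) p) *
      Real.exp (-η * brier (Pi.single i 1) ξ)
      = Real.exp (-η * s) * (p i * Real.exp (2 * η * (ξ i - p i - m))) := by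
    intro i
    rw [mul_assoc, ← Real.exp_add, mul_left_comm, ← Real.exp_add, brier_single, brier_single, hξ]
    congr 2
    ring
  simp only [he, ← Finset.mul_sum]
  refine (mul_le_mul_of_nonneg_left h (Real.exp_pos _).le).trans ?_
  rw [← Real.exp_add, Real.exp_le_one_iff]
  nlinarith [mul_nonneg (mul_nonneg hη.1.le (sub_nonneg.mpr hη.2)) hs0]

/-- First-order optimality conditions, at the vertices, for the minimizer of
`q ↦ ⟨q, G⟩ + ‖q‖²` on the simplex. -/
theorem exists_simplex_point {d : ℕ} (hd : 0 < d) (G : Fin d → ℝ) :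
    ∃ p ∈ stdSimplex ℝ (Fin d), ∀ i,
      ∑ j, p j * G j + 2 * ∑ j, p j ^ 2 ≤ G i + 2 * p i := by
  have hne : (stdSimplex ℝ (Fin d)).Nonempty := ⟨_, single_mem_stdSimplex ℝ (⟨0, hd⟩ : Fin d)⟩
  obtain ⟨p, hp, hmin⟩ := (isCompact_stdSimplex ℝ (Fin d)).exists_isMinOn hne
    (f := fun q => ∑ j, (q j * G j + q j ^ 2)) (by fun_prop)
  refine ⟨p, hp, fun i => ?_⟩
  set e : Fin d → ℝ := Pi.single i 1 with he
  have hes : e ∈ stdSimplex ℝ (Fin d) := single_mem_stdSimplex ℝ i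
  set a := ∑ j, (e j - p j) * (G j + 2 * p j) with ha
  set b := ∑ j, (e j - p j) ^ 2 with hb
  have hb0 : 0 ≤ b := Finset.sum_nonneg fun j _ => sq_nonneg _
  have hvar : ∀ t : ℝ, 0 < t → t ≤ 1 → 0 ≤ a + b * t := by
    intro t ht0 ht1
    have hq := (convex_stdSimplex ℝ (Fin d)) hp hes (sub_nonneg.mpr ht1) ht0.le (by ring)
    have h := hmin hq
    simp only [Set.mem_ofPred_eq, Pi.add_apply, Pi.smul_apply, smul_eq_mul] at h
    have hexp : ∑ j, (((1 - t) * p j + t * e j) * G j + ((1 - t) * p j + t * e j) ^ 2)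
        = ∑ j, (p j * G j + p j ^ 2) + t * (a + b * t) := by
      rw [ha, hb, mul_add, Finset.sum_mul, Finset.mul_sum, Finset.mul_sum,
        ← Finset.sum_add_distrib, ← Finset.sum_add_distrib]
      exact Finset.sum_congr rfl fun j _ => by ring
    rw [hexp] at h
    exact nonneg_of_mul_nonneg_right (by linarith) ht0
  have ha0 : 0 ≤ a := by
    by_contra! hlt
    have hpos : 0 < b - a := by linarith
    have h := hvar (-a / (b - a)) (div_pos (by linarith) hpos)
      ((div_le_one hpos).mpr (by linarith))
    have h2 : a + b * (-a / (b - a)) = -(a ^ 2 / (b - a)) := by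
      field_simp
      ring
    rw [h2] at h
    have h3 : 0 < a ^ 2 / (b - a) := div_pos (by nlinarith) hpos
    linarith
  have hsplit : a = G i + 2 * p i - (∑ j, p j * G j + 2 * ∑ j, p j ^ 2) := by
    have h1 : ∑ j, e j * (G j + 2 * p j) = G i + 2 * p i := by
      simp [he, Pi.single_apply]
    rw [ha, ← h1, Finset.mul_sum, ← Finset.sum_add_distrib, ← Finset.sum_sub_distrib]
    exact Finset.sum_congr rfl fun j _ => by ring
  linarith

theorem continuous_expertPred (n d : ℕ) (x : Fin n → ℝ) :
    Continuous fun α => expertPred n d α x := by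
  refine continuous_pi fun i => ?_
  unfold expertPred
  split_ifs <;> fun_prop

theorem brier_nonneg {d : ℕ} (y γ : Fin d → ℝ) : 0 ≤ brier y γ :=
  Finset.sum_nonneg fun _ _ => sq_nonneg _

/-- Mixability of the Brier game with linear experts for η ∈ (0,1]: there is a
prediction γ in the hyperplane Γ = {Σγ_i = 1} whose loss on each vertex outcome is
bounded by the generalized prediction. -/
theorem brier_mixable (n d : ℕ) (hn : 1 ≤ n) (hd : 2 ≤ d) (x : Fin n → ℝ)
    (η : ℝ) (hη : η ∈ Set.Ioc (0 : ℝ) 1)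
    (P : Measure (Fin (d - 1) → Fin n → ℝ)) [IsProbabilityMeasure P] :
    ∃ γ : Fin d → ℝ, (∑ i, γ i = 1) ∧
      ∀ i : Fin d,
        brier (Pi.single i 1) γ
          ≤ -(1 / η) * Real.log
              (∫ α, Real.exp (-η * brier (Pi.single i 1) (expertPred n d α x)) ∂P) := by
  have hη0 := hη.1
  set F : Fin d → ℝ := fun i =>
    ∫ α, Real.exp (-η * brier (Pi.single i 1) (expertPred n d α x)) ∂P with hF
  have hcont : ∀ i : Fin d, Continuous fun α =>
      Real.exp (-η * brier (Pi.single i 1) (expertPred n d α x)) := by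
    intro i
    have := continuous_expertPred n d x
    unfold brier
    fun_prop
  have hint : ∀ i : Fin d, Integrable (fun α =>
      Real.exp (-η * brier (Pi.single i 1) (expertPred n d α x))) P := by
    intro i
    refine Integrable.of_bound (hcont i).aestronglyMeasurable 1
      (Filter.Eventually.of_forall fun α => ?_)
    rw [Real.norm_eq_abs, Real.abs_exp, Real.exp_le_one_iff]
    nlinarith [mul_nonneg hη0.le (brier_nonneg (Pi.single i 1) (expertPred n d α x))]
  have hFpos : ∀ i, 0 < F i := fun i => integral_exp_pos (hint i)
  obtain ⟨p, hp, hopt⟩ := exists_simplex_point (by omega : 0 < d)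
    fun i => -(1 / η) * Real.log (F i)
  have hsum : ∑ i, p i * Real.exp (η * brier (Pi.single i 1) p) * F i ≤ 1 := by
    simp only [hF, ← integral_const_mul]
    rw [← integral_finsetSum _ fun i _ => (hint i).const_mul _]
    refine (integral_mono (integrable_finsetSum _ fun i _ => (hint i).const_mul _)
      (integrable_const (1 : ℝ)) fun α => support_ineq p _ hp η hη).trans ?_
    simp
  have hlog : ∑ i, p i * (η * brier (Pi.single i 1) p + Real.log (F i)) ≤ 0 := by
    have hle : ∀ i, p i * (η * brier (Pi.single i 1) p + Real.log (F i))
        ≤ p i * Real.exp (η * brier (Pi.single i 1) p) * F i - p i := by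
      intro i
      have h := Real.log_le_sub_one_of_pos
        (mul_pos (Real.exp_pos (η * brier (Pi.single i 1) p)) (hFpos i))
      rw [Real.log_mul (Real.exp_pos _).ne' (hFpos i).ne', Real.log_exp] at h
      nlinarith [mul_le_mul_of_nonneg_left h (hp.1 i)]
    refine (Finset.sum_le_sum fun i _ => hle i).trans ?_
    rw [Finset.sum_sub_distrib, hp.2]
    linarith
  -- The average loss of `p` under `p` itself.
  have hent : ∑ i, p i * brier (Pi.single i 1) p = 1 - ∑ j, p j ^ 2 := by
    have h : ∀ i, p i * brier (Pi.single i 1) p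
        = p i * (∑ j, p j ^ 2 + 1) - 2 * p i ^ 2 := by
      intro i
      rw [brier_single]
      ring
    simp only [h, Finset.sum_sub_distrib, ← Finset.sum_mul, ← Finset.mul_sum, hp.2]
    ring
  have hdual : 1 - ∑ j, p j ^ 2 ≤ ∑ j, p j * (-(1 / η) * Real.log (F j)) := by
    have h : ∑ i, p i * (η * brier (Pi.single i 1) p + Real.log (F i))
        = η * (∑ i, p i * brier (Pi.single i 1) p
          - ∑ j, p j * (-(1 / η) * Real.log (F j))) := by
      rw [← Finset.sum_sub_distrib, Finset.mul_sum]
      refine Finset.sum_congr rfl fun i _ => ?_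
      field_simp
      ring
    rw [h, hent] at hlog
    nlinarith [nonpos_of_mul_nonpos_right hlog hη0]
  refine ⟨p, hp.2, fun i => ?_⟩
  rw [brier_single]
  have := hopt i
  linarith
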